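/- Let K be obtained from a SET graph K⁻ by adding a new vertex z adjacent to one odd-degree vertex and one even-degree vertex of K⁻, and let n = |V(K)|. Then K admits a path decomposition D with D(z) ≥ 2 and |D| ≤ ⌈n/2⌉. -/

import Mathlib

open SimpleGraph

variable {V : Type*}

/-- A path decomposition of a simple graph `G`: a list of nontrivial paths of `G`
that are pairwise edge-disjoint and together cover every edge of `G`. -/
structure PathDecomp (G : SimpleGraph V) where
  paths : List (Σ a b : V, G.Walk a b)
  nontrivial : ∀ p ∈ paths, 0 < p.2.2.length
  isPath : ∀ p ∈ paths, p.2.2.IsPath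
  edgeDisjoint : paths.Pairwise fun p q => ∀ e, e ∈ p.2.2.edges → e ∉ q.2.2.edges
  covers : ∀ e ∈ G.edgeSet, ∃ p ∈ paths, e ∈ p.2.2.edges

/-- Cardinality of a path decomposition. -/
def pdCard {G : SimpleGraph V} (D : PathDecomp G) : ℕ := D.paths.length

/-- `ends D u` is the number of paths in `D` having `u` as an end vertex. -/
def ends [DecidableEq V] {G : SimpleGraph V} (D : PathDecomp G) (u : V) : ℕ :=
  (D.paths.filter fun p => p.1 = u ∨ p.2.1 = u).length

/-- The path number: minimum cardinality of a path decomposition. -/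
noncomputable def pn (G : SimpleGraph V) : ℕ :=
  sInf {n | ∃ D : PathDecomp G, pdCard D = n}

/-- Degree as the `ncard` of the neighbor set (no decidability needed). -/
noncomputable def ndeg (G : SimpleGraph V) (v : V) : ℕ := {w | G.Adj v w}.ncard

/-- A SET graph: the set of even-degree vertices consists of exactly three
mutually adjacent vertices, and every odd-degree vertex has at least two
even-degree neighbors. -/
def IsSETGraph (G : SimpleGraph V) : Prop :=
  (∃ a b c : V, a ≠ b ∧ a ≠ c ∧ b ≠ c ∧
      {v : V | Even (ndeg G v)} = {a, b, c} ∧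
      G.Adj a b ∧ G.Adj a c ∧ G.Adj b c) ∧
  ∀ v : V, Odd (ndeg G v) →
    ∃ w₁ w₂ : V, w₁ ≠ w₂ ∧ G.Adj v w₁ ∧ G.Adj v w₂ ∧
      Even (ndeg G w₁) ∧ Even (ndeg G w₂)


/-- The multiset of edges traversed by a list of vertices. -/
def pathEdges : List V → Multiset (Sym2 V)
  | [] => 0
  | [_] => 0
  | a :: b :: l => s(a, b) ::ₘ pathEdges (b :: l)

/-- The two end vertices of a list of vertices, with multiplicity. -/
def pathEnds (l : List V) : Multiset V :=
  ((l.head?.toList ++ l.getLast?.toList : List V) : Multiset V)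

theorem pathEdges_append (l r : List V) (x y : V) :
    pathEdges (l ++ x :: y :: r) = pathEdges (l ++ [x]) + s(x, y) ::ₘ pathEdges (y :: r) := by
  induction l with
  | nil => simp [pathEdges]
  | cons a l ih =>
    cases l with
    | nil => simp [pathEdges, Multiset.cons_swap]
    | cons c l =>
      simp only [List.cons_append, pathEdges] at ih ⊢
      rw [ih, Multiset.cons_add]

theorem pathEdges_reverse (l : List V) : pathEdges l.reverse = pathEdges l := by
  induction l with
  | nil => rfl
  | cons a l ih =>
    cases l with
    | nil => rfl
    | cons c l =>
      have := pathEdges_append l.reverse [] c a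
      simp only [List.reverse_cons, List.append_assoc, List.cons_append, List.nil_append] at this ih ⊢
      rw [this, ih]
      simp [pathEdges, Sym2.eq_swap, add_comm _ {s(a, c)}]

theorem pathEnds_reverse (l : List V) : pathEnds l.reverse = pathEnds l := by
  simp only [pathEnds, List.head?_reverse, List.getLast?_reverse]
  exact Multiset.coe_eq_coe.2 List.perm_append_comm

theorem pathEnds_cons (a : V) (l : List V) :
    pathEnds (a :: l) = a ::ₘ ((a :: l).getLast?.toList : Multiset V) := by
  simp [pathEnds]

theorem pathEnds_append_cons (x a : V) (l r : List V) :
    pathEnds (x :: l ++ a :: r) = x ::ₘ ((a :: r).getLast?.toList : Multiset V) := by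
  rw [List.cons_append, pathEnds_cons, ← List.cons_append, List.getLast?_append_of_ne_nil _ (by simp)]

theorem sum_update_add {ι M : Type*} [Fintype ι] [DecidableEq ι] [AddCommMonoid M]
    (g : List V → M) (D : ι → List V) (i : ι) (p : List V) :
    (∑ j, g (Function.update D i p j)) + g (D i) = (∑ j, g (D j)) + g p := by
  rw [← Finset.add_sum_erase _ _ (Finset.mem_univ i),
    ← Finset.add_sum_erase (Finset.univ) (fun j => g (D j)) (Finset.mem_univ i),
    Finset.sum_congr rfl (g := fun j => g (D j))
      (fun j hj => by rw [Function.update_of_ne (Finset.ne_of_mem_erase hj)])]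
  simp only [Function.update_self]
  abel

/-- A path can be oriented so as to start at a given end vertex. -/
theorem exists_cons_of_mem_pathEnds {p : List V} {v : V} (hv : v ∈ pathEnds p) :
    ∃ t, (v :: t).Perm p ∧ pathEdges (v :: t) = pathEdges p ∧ pathEnds (v :: t) = pathEnds p := by
  simp only [pathEnds, Multiset.mem_coe, List.mem_append, Option.mem_toList] at hv
  rcases hv with hv | hv
  · obtain ⟨t, rfl⟩ := List.head?_eq_some_iff.1 hv
    exact ⟨t, .refl _, rfl, rfl⟩
  · rw [← List.head?_reverse] at hv
    obtain ⟨t, ht⟩ := List.head?_eq_some_iff.1 hv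
    refine ⟨t, ?_⟩
    rw [← ht, pathEdges_reverse, pathEnds_reverse]
    exact ⟨List.reverse_perm p, rfl, rfl⟩

/-- Rerouting at `a`: if `b` and all neighbors of `a` are ends of paths of an edge-disjoint family,
then the edge `ab` can be added so that one end moves from `b` to `a`. The paths through `a` keep
their vertices, and those ending at `a` still do. -/
theorem exists_insert_edge {ι : Type*} [Fintype ι] [DecidableEq ι] (a : V) (n : ℕ) :
    ∀ (D : ι → List V) (b : V), (∑ i, pathEdges (D i)).card < n → a ≠ b →
      (∀ i, (D i).Nodup) → (∑ i, pathEdges (D i)).Nodup → s(a, b) ∉ ∑ i, pathEdges (D i) →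
      b ∈ ∑ i, pathEnds (D i) →
      (∀ v, s(a, v) ∈ ∑ i, pathEdges (D i) → v ∈ ∑ i, pathEnds (D i)) →
      ∃ D' : ι → List V, (∀ i, (D' i).Nodup) ∧ (∀ i, (D i).length ≤ (D' i).length) ∧
        ∑ i, pathEdges (D' i) = s(a, b) ::ₘ ∑ i, pathEdges (D i) ∧
        b ::ₘ ∑ i, pathEnds (D' i) = a ::ₘ ∑ i, pathEnds (D i) ∧
        ∀ i, a ∈ D i → (D' i).Perm (D i) ∧ (a ∈ pathEnds (D i) → a ∈ pathEnds (D' i)) := by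
  induction n with
  | zero => intro D b h; omega
  | succ n ih =>
    intro D b hn hab hnd hE habE hb hN
    obtain ⟨i, -, hi⟩ := Multiset.mem_sum.1 hb
    obtain ⟨t, hperm, hedges, hends⟩ := exists_cons_of_mem_pathEnds hi
    have hndt : (b :: t).Nodup := hperm.nodup_iff.2 (hnd i)
    by_cases ha : a ∈ t
    · obtain ⟨l, R, rfl⟩ := List.append_of_mem ha
      rcases List.eq_nil_or_concat l with rfl | ⟨l, x, rfl⟩
      · exact absurd (Multiset.mem_sum.2 ⟨i, Finset.mem_univ i, by
          rw [← hedges]; simp [pathEdges, Sym2.eq_swap]⟩) habE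
      have hpe : pathEdges (D i) = pathEdges (b :: (l ++ [x])) + s(x, a) ::ₘ pathEdges (a :: R) := by
        rw [← hedges]
        simpa using pathEdges_append (b :: l) R x a
      have hen : pathEnds (D i) = b ::ₘ ((a :: R).getLast?.toList : Multiset V) := by
        rw [← hends]
        simpa using pathEnds_append_cons b a (l ++ [x]) R
      have hsumE := sum_update_add pathEdges D i (a :: R)
      have hsumV := sum_update_add pathEnds D i (a :: R)
      set D₀ := Function.update D i (a :: R) with hD₀
      have hE₀ : ∑ j, pathEdges (D j) =
          ∑ j, pathEdges (D₀ j) + (s(a, x) ::ₘ pathEdges (b :: (l ++ [x]))) := by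
        rw [hpe, Sym2.eq_swap] at hsumE
        apply add_right_cancel (b := pathEdges (a :: R))
        rw [← hsumE]
        simp only [← Multiset.singleton_add]
        abel
      have hV₀ : b ::ₘ ∑ j, pathEnds (D₀ j) = a ::ₘ ∑ j, pathEnds (D j) := by
        rw [hen, pathEnds_cons, Multiset.add_cons, Multiset.add_cons, ← Multiset.cons_add,
          ← Multiset.cons_add] at hsumV
        exact add_right_cancel hsumV
      have hxb : x ≠ b := by rintro rfl; exact habE (by rw [hE₀]; simp)
      have hax : a ≠ x := by rintro rfl; simp [List.nodup_append] at hndt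
      have hmem : ∀ v, v ≠ b → v ∈ ∑ j, pathEnds (D j) → v ∈ ∑ j, pathEnds (D₀ j) := by
        intro v hvb hv
        have : v ∈ b ::ₘ ∑ j, pathEnds (D₀ j) := hV₀ ▸ Multiset.mem_cons_of_mem hv
        exact (Multiset.mem_cons.1 this).resolve_left hvb
      rw [hE₀, Multiset.add_cons, Multiset.nodup_cons, Multiset.nodup_add, Multiset.mem_add] at hE
      obtain ⟨D₁, hnd₁, hlen₁, hE₁, hV₁, hkeep⟩ := ih D₀ x (by
          rw [hE₀, Multiset.card_add, Multiset.card_cons] at hn; omega) hax (by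
          intro j
          by_cases hj : j = i
          · subst hj
            rw [hD₀, Function.update_self]
            exact hndt.sublist ((List.sublist_append_right _ _).trans (List.sublist_cons_self _ _))
          · rw [hD₀, Function.update_of_ne hj]; exact hnd j)
        hE.2.1 (fun h => hE.1 (.inl h)) (hmem x hxb (hN x (by rw [hE₀]; simp)))
        (fun v hv => by
          have hvE : s(a, v) ∈ ∑ j, pathEdges (D j) := by
            rw [hE₀]; exact Multiset.mem_add.2 (.inl hv)
          exact hmem v (by rintro rfl; exact habE hvE) (hN v hvE))
      have hD₀i : D₀ i = a :: R := Function.update_self ..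
      obtain ⟨hpi, hai⟩ := hkeep i (by simp [hD₀i])
      obtain ⟨R', hperm', hedges', hends'⟩ :=
        exists_cons_of_mem_pathEnds (hai (by simp [hD₀i, pathEnds]))
      have hRR : R'.Perm R := List.perm_cons a |>.1 (hD₀i ▸ hperm'.trans hpi)
      have hpermD : (x :: (l.reverse ++ [b]) ++ a :: R').Perm (D i) := by
        refine List.Perm.trans ?_ hperm
        have : (x :: (l.reverse ++ [b])).Perm (b :: (l ++ [x])) := by
          simpa using List.reverse_perm (b :: (l ++ [x]))
        simpa using this.append (hRR.cons a)
      refine ⟨Function.update D₁ i (x :: (l.reverse ++ [b]) ++ a :: R'), ?_, ?_, ?_, ?_, ?_⟩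
      · intro j
        by_cases hj : j = i
        · subst hj
          rw [Function.update_self]
          exact hpermD.nodup_iff.2 (hnd j)
        · rw [Function.update_of_ne hj]; exact hnd₁ j
      · intro j
        by_cases hj : j = i
        · subst hj
          rw [Function.update_self, hpermD.length_eq]
        · have := hlen₁ j
          rw [hD₀, Function.update_of_ne hj] at this
          rwa [Function.update_of_ne hj]
      · have hsum := sum_update_add pathEdges D₁ i (x :: (l.reverse ++ [b]) ++ a :: R')
        have happ : pathEdges (x :: (l.reverse ++ [b]) ++ a :: R') =
            pathEdges (b :: (l ++ [x])) + s(a, b) ::ₘ pathEdges (D₁ i) := by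
          have h := pathEdges_append (x :: l.reverse) R' b a
          rw [← pathEdges_reverse (b :: (l ++ [x])), ← hedges', Sym2.eq_swap (a := a)]
          simpa using h
        rw [happ, hE₁] at hsum
        apply add_right_cancel (b := pathEdges (D₁ i))
        rw [hsum, hE₀]
        simp only [← Multiset.singleton_add]
        abel
      · have hsum := sum_update_add pathEnds D₁ i (x :: (l.reverse ++ [b]) ++ a :: R')
        rw [← hends', pathEnds_append_cons, pathEnds_cons, Multiset.add_cons, Multiset.add_cons,
          ← Multiset.cons_add, ← Multiset.cons_add] at hsum
        have hsum' : a ::ₘ ∑ j, pathEnds (Function.update D₁ i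
            (x :: (l.reverse ++ [b]) ++ a :: R') j) = x ::ₘ ∑ j, pathEnds (D₁ j) :=
          add_right_cancel hsum
        rw [hV₁, Multiset.cons_inj_right] at hsum'
        rw [hsum', hV₀]
      · intro j haj
        by_cases hj : j = i
        · subst hj
          rw [Function.update_self]
          refine ⟨hpermD, fun h => ?_⟩
          rw [hen, Multiset.mem_cons, Multiset.mem_coe, Option.mem_toList] at h
          rcases h with h | h
          · exact absurd h hab
          · rcases List.eq_nil_or_concat R with rfl | ⟨R, y, rfl⟩
            · rw [List.perm_nil.1 hRR, pathEnds_append_cons]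
              simp
            · simp [List.getLast?_cons] at h
              subst h
              simp [List.nodup_append] at hndt
        · have := hkeep j (by rwa [hD₀, Function.update_of_ne hj])
          rw [hD₀, Function.update_of_ne hj] at this
          rwa [Function.update_of_ne hj]
    · have hat : a ∉ b :: t := by simp [hab, ha]
      have hai : a ∉ D i := fun h => hat (hperm.mem_iff.2 h)
      refine ⟨Function.update D i (a :: b :: t), ?_, ?_, ?_, ?_, ?_⟩
      · intro j
        by_cases hj : j = i
        · subst hj
          rw [Function.update_self]
          exact List.nodup_cons.2 ⟨hat, hndt⟩
        · rw [Function.update_of_ne hj]; exact hnd j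
      · intro j
        by_cases hj : j = i
        · subst hj
          rw [Function.update_self, ← hperm.length_eq]
          simp
        · rw [Function.update_of_ne hj]
      · have hsum := sum_update_add pathEdges D i (a :: b :: t)
        rw [pathEdges, hedges, Multiset.add_cons, ← Multiset.cons_add] at hsum
        exact add_right_cancel hsum
      · have hsum := sum_update_add pathEnds D i (a :: b :: t)
        rw [← hends, pathEnds_cons, pathEnds_cons, List.getLast?_cons_cons, Multiset.add_cons,
          Multiset.add_cons, ← Multiset.cons_add, ← Multiset.cons_add] at hsum
        exact add_right_cancel hsum
      · intro j haj
        have hj : j ≠ i := by rintro rfl; exact hai haj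
        rw [Function.update_of_ne hj]
        exact ⟨.refl _, id⟩

section EdgeSets

variable [DecidableEq V]

/-- The edge set `E` decomposes into nontrivial paths, `f v` of which end at `v`. -/
def HasPathDecomp (E : Finset (Sym2 V)) (f : V → ℕ) : Prop :=
  ∃ (k : ℕ) (D : Fin k → List V), (∀ i, (D i).Nodup) ∧ (∀ i, 2 ≤ (D i).length) ∧
    ∑ i, pathEdges (D i) = E.val ∧ ∀ v, (∑ i, pathEnds (D i)).count v = f v

theorem HasPathDecomp.congr {E : Finset (Sym2 V)} {f g : V → ℕ} (h : HasPathDecomp E f)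
    (hfg : ∀ v, f v = g v) : HasPathDecomp E g :=
  funext hfg ▸ h

theorem hasPathDecomp_empty : HasPathDecomp (∅ : Finset (Sym2 V)) fun _ => 0 :=
  ⟨0, Fin.elim0, fun i => i.elim0, fun i => i.elim0, by simp, by simp⟩

/-- Adding an edge as a path of its own. -/
theorem HasPathDecomp.add_edge {E : Finset (Sym2 V)} {f : V → ℕ} {a b : V}
    (h : HasPathDecomp (E.erase s(a, b)) f) (hE : s(a, b) ∈ E) (hab : a ≠ b) :
    HasPathDecomp E fun v => f v + (if v = a then 1 else 0) + if v = b then 1 else 0 := by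
  obtain ⟨k, D, hnd, hlen, hedges, hends⟩ := h
  refine ⟨k + 1, Fin.cons [a, b] D, ?_, ?_, ?_, ?_⟩
  · intro i
    cases i using Fin.cases <;> simp [hab, hnd]
  · intro i
    cases i using Fin.cases <;> simp [hlen]
  · simp [Fin.sum_univ_succ, hedges, pathEdges, Multiset.cons_erase hE]
  · intro v
    simp only [Fin.sum_univ_succ, Fin.cons_zero, Fin.cons_succ, Multiset.count_add, hends]
    simp [pathEnds, List.count_cons, eq_comm (a := v)]
    omega

/-- Adding an edge `ab` while moving an end from `b` to `a`. -/
theorem HasPathDecomp.move_end {E : Finset (Sym2 V)} {f g : V → ℕ} (a b : V)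
    (h : HasPathDecomp (E.erase s(a, b)) f) (hE : s(a, b) ∈ E) (hab : a ≠ b) (hb : 0 < f b)
    (hN : ∀ v, s(a, v) ∈ E → v ≠ b → 0 < f v)
    (hg : ∀ v, g v + (if v = b then 1 else 0) = f v + if v = a then 1 else 0) :
    HasPathDecomp E g := by
  obtain ⟨k, D, hnd, hlen, hedges, hends⟩ := h
  obtain ⟨D', hnd', hlen', hedges', hends', -⟩ := exists_insert_edge a _ D b (Nat.lt_succ_self _) hab
    hnd (hedges ▸ Finset.nodup _) (by rw [hedges]; exact Finset.notMem_erase _ _)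
    (by rw [← Multiset.count_pos, hends]; exact hb)
    (by
      intro v hv
      rw [hedges, Finset.mem_val, Finset.mem_erase] at hv
      rw [← Multiset.count_pos, hends]
      exact hN v hv.2 (by rintro rfl; exact hv.1 rfl))
  refine ⟨k, D', hnd', fun i => (hlen i).trans (hlen' i), ?_, fun v => ?_⟩
  · rw [hedges', hedges, Finset.erase_val, Multiset.cons_erase hE]
  · have := congrArg (Multiset.count v) hends'
    rw [Multiset.count_cons, Multiset.count_cons, hends] at this
    have := hg v
    omega

/-- The number of edges of `E` at `v`. -/
def edgeDegree (E : Finset (Sym2 V)) (v : V) : ℕ := (E.filter (v ∈ ·)).card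

theorem edgeDegree_erase {E : Finset (Sym2 V)} {a b : V} (h : s(a, b) ∈ E) (v : V) :
    edgeDegree E v = edgeDegree (E.erase s(a, b)) v + if v = a ∨ v = b then 1 else 0 := by
  unfold edgeDegree
  rw [Finset.filter_erase]
  split_ifs with hv
  · rw [Finset.card_erase_add_one]
    simpa [h] using hv
  · rw [Finset.erase_eq_of_notMem (by simpa [h] using hv), add_zero]

theorem exists_mem_of_edgeDegree_pos {E : Finset (Sym2 V)} {v : V} (h : 0 < edgeDegree E v) :
    ∃ w, s(v, w) ∈ E := by
  obtain ⟨e, he⟩ := Finset.card_pos.1 h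
  rw [Finset.mem_filter] at he
  obtain ⟨w, rfl⟩ := he.2
  exact ⟨w, he.1⟩

theorem edgeDegree_pos {E : Finset (Sym2 V)} {v w : V} (h : s(v, w) ∈ E) : 0 < edgeDegree E v :=
  Finset.card_pos.2 ⟨s(v, w), by simp [h]⟩

/-- If every vertex is odd or isolated, there is a decomposition in which each odd vertex is the end
of exactly one path. -/
def OddDecomposable (E : Finset (Sym2 V)) : Prop :=
  (∀ v, edgeDegree E v % 2 = 0 → edgeDegree E v = 0) → HasPathDecomp E fun v => edgeDegree E v % 2

/-- If all vertices but two nonadjacent even ones are odd or isolated, and one of those two, `u`, is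
not isolated, there is a decomposition in which each odd vertex is the end of exactly one path, `u`
of two paths and the other even vertices of none. -/
def EvenPairDecomposable (E : Finset (Sym2 V)) : Prop :=
  ∀ u v, u ≠ v → s(u, v) ∉ E → 0 < edgeDegree E u → edgeDegree E u % 2 = 0 →
    edgeDegree E v % 2 = 0 →
    (∀ w, w ≠ u → w ≠ v → edgeDegree E w % 2 = 0 → edgeDegree E w = 0) →
    HasPathDecomp E fun w => edgeDegree E w % 2 + if w = u then 2 else 0

theorem oddDecomposable_of_erase {E : Finset (Sym2 V)} (hloop : ∀ a, s(a, a) ∉ E)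
    (ih : ∀ e ∈ E, OddDecomposable (E.erase e) ∧ EvenPairDecomposable (E.erase e)) :
    OddDecomposable E := by
  intro hodd
  rcases E.eq_empty_or_nonempty with rfl | ⟨e, he⟩
  · exact hasPathDecomp_empty.congr (by simp [edgeDegree])
  have key : ∀ u v, s(u, v) ∈ E → 0 < edgeDegree (E.erase s(u, v)) u →
      HasPathDecomp E fun v => edgeDegree E v % 2 := by
    intro u v huv hu
    have hne : u ≠ v := by rintro rfl; exact hloop u huv
    have hdeg := edgeDegree_erase huv
    have h := (ih _ huv).2 u v hne (Finset.notMem_erase _ _) hu (by grind) (by grind) (by grind)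
    rw [Sym2.eq_swap] at h
    refine h.move_end v u (Sym2.eq_swap ▸ huv) hne.symm (by simp) (fun w hw hwu => ?_) (by grind)
    have hwv : w ≠ v := by rintro rfl; exact hloop w hw
    have := edgeDegree_pos (Sym2.eq_swap ▸ hw : s(w, v) ∈ E)
    grind
  induction e with | _ u v
  have hne : u ≠ v := by rintro rfl; exact hloop u he
  have hdeg := edgeDegree_erase he
  by_cases hu : 0 < edgeDegree (E.erase s(u, v)) u
  · exact key u v he hu
  by_cases hv : 0 < edgeDegree (E.erase s(u, v)) v
  · rw [Sym2.eq_swap] at he hv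
    exact key v u he hv
  refine (((ih _ he).1 (by grind)).add_edge he hne).congr (by grind)

theorem evenPairDecomposable_of_ssubset {E : Finset (Sym2 V)} (hloop : ∀ a, s(a, a) ∉ E)
    (ih : ∀ F ⊂ E, OddDecomposable F ∧ EvenPairDecomposable F) :
    EvenPairDecomposable E := by
  intro u v huv huvE hu hu2 hv2 hodd
  have hne : ∀ {a b}, s(a, b) ∈ E → a ≠ b := by
    rintro a b h rfl
    exact hloop a h
  have hpos : ∀ {a b}, s(a, b) ∈ E → 0 < edgeDegree E b := fun h =>
    edgeDegree_pos (Sym2.eq_swap ▸ h)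
  by_cases hv : edgeDegree E v = 0
  · obtain ⟨w, hw⟩ := exists_mem_of_edgeDegree_pos hu
    have hdeg := edgeDegree_erase hw
    have huw := hne hw
    have hwv : w ≠ v := by rintro rfl; exact huvE hw
    have hw0 := hpos hw
    obtain ⟨ih₁, ih₂⟩ := ih _ (Finset.erase_ssubset hw)
    by_cases hwi : 0 < edgeDegree (E.erase s(u, w)) w
    · have hwvE : s(w, v) ∉ E.erase s(u, w) := fun h => by
        have := hpos (Finset.mem_of_mem_erase h)
        omega
      refine (ih₂ w v hwv hwvE hwi (by grind) (by grind) (by grind)).move_end u w hw huw (by simp)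
        (fun t ht htw => ?_) (by grind)
      have htv : t ≠ v := by rintro rfl; exact huvE ht
      have := hpos ht
      have := hne ht
      grind
    · exact ((ih₁ (by grind)).add_edge hw huw).congr (by grind)
  · obtain ⟨w, hw⟩ := exists_mem_of_edgeDegree_pos (Nat.pos_of_ne_zero hv)
    have hwE : s(w, v) ∈ E := Sym2.eq_swap ▸ hw
    have hwv := hne hwE
    have hwu : w ≠ u := by rintro rfl; exact huvE hwE
    have hw0 := hpos hw
    by_cases hwuE : s(u, w) ∈ E
    · have hwvE : s(w, v) ∈ E.erase s(u, w) := by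
        simp [hwE, huv.symm, hwv.symm]
      have hdeg := edgeDegree_erase hwuE
      have hdeg' := edgeDegree_erase hwvE
      have hdecomp := (ih _ ((Finset.erase_ssubset hwvE).trans (Finset.erase_ssubset hwuE))).1
        (by grind)
      have hdecomp' : HasPathDecomp (E.erase s(u, w)) fun t =>
          if t = v then 0 else if t = w then 2 else
            edgeDegree ((E.erase s(u, w)).erase s(w, v)) t % 2 := by
        refine hdecomp.move_end w v hwvE hwv (by grind) (fun t ht htv => ?_) (by grind)
        have := hpos (Finset.mem_of_mem_erase ht)
        have := hne (Finset.mem_of_mem_erase ht)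
        grind
      refine hdecomp'.move_end u w hwuE hwu.symm (by simp [hwv]) (fun t ht htw => ?_) (by grind)
      have htv : t ≠ v := by rintro rfl; exact huvE ht
      have := hpos ht
      have := hne ht
      grind
    · have hdeg := edgeDegree_erase hwE
      refine ((ih _ (Finset.erase_ssubset hwE)).2 u w hwu.symm (by simp [hwuE]) (by grind) (by grind)
        (by grind) (by grind)).move_end w v hwE hwv (by grind) (fun t ht htv => ?_) (by grind)
      have := hpos ht
      have := hne ht
      grind

theorem oddDecomposable_and_evenPairDecomposable (E : Finset (Sym2 V)) :
    (∀ a, s(a, a) ∉ E) → OddDecomposable E ∧ EvenPairDecomposable E := by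
  induction E using Finset.strongInduction with
  | H E ih =>
    intro hloop
    have ih' : ∀ F ⊂ E, OddDecomposable F ∧ EvenPairDecomposable F := fun F hF =>
      ih F hF fun a ha => hloop a (hF.1 ha)
    exact ⟨oddDecomposable_of_erase hloop fun e he => ih' _ (Finset.erase_ssubset he),
      evenPairDecomposable_of_ssubset hloop ih'⟩

end EdgeSets

/-- A list of distinct vertices whose consecutive pairs are edges is the support of a path. -/
theorem exists_walk_of_pathEdges (G : SimpleGraph V) (l : List V) :
    ∀ a, (∀ e ∈ pathEdges (a :: l), e ∈ G.edgeSet) →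
      ∃ (b : V) (p : G.Walk a b), p.support = a :: l ∧
        (p.edges : Multiset (Sym2 V)) = pathEdges (a :: l) ∧ (a :: l).getLast? = some b := by
  induction l with
  | nil => exact fun a _ => ⟨a, .nil, rfl, rfl, rfl⟩
  | cons c l ih =>
    intro a h
    obtain ⟨b, p, hsupp, hedges, hlast⟩ := ih c fun e he => h e (Multiset.mem_cons_of_mem he)
    have hac : G.Adj a c := h s(a, c) (Multiset.mem_cons_self _ _)
    refine ⟨b, .cons hac p, by simp [hsupp], ?_, by rw [List.getLast?_cons_cons, hlast]⟩
    rw [pathEdges, ← hedges, SimpleGraph.Walk.edges_cons, Multiset.cons_coe]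

theorem exists_path_of_nodup (G : SimpleGraph V) {l : List V} (hnd : l.Nodup)
    (hlen : 2 ≤ l.length) (hE : ∀ e ∈ pathEdges l, e ∈ G.edgeSet) :
    ∃ p : Σ a b : V, G.Walk a b, 0 < p.2.2.length ∧ p.2.2.IsPath ∧ p.1 ≠ p.2.1 ∧
      (p.2.2.edges : Multiset (Sym2 V)) = pathEdges l ∧ pathEnds l = {p.1, p.2.1} := by
  cases l with
  | nil => simp at hlen
  | cons a l =>
    obtain ⟨b, p, hsupp, hedges, hlast⟩ := exists_walk_of_pathEdges G l a hE
    have hpath : p.IsPath := (SimpleGraph.Walk.isPath_def p).2 (hsupp ▸ hnd)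
    have hpos : 0 < p.length := by
      have := p.length_support
      rw [hsupp] at this
      omega
    refine ⟨⟨a, b, p⟩, hpos, hpath, ?_, hedges, by rw [pathEnds_cons, hlast]; rfl⟩
    intro hab
    change a = b at hab
    subst hab
    rw [SimpleGraph.Walk.isPath_iff_eq_nil.1 hpath] at hpos
    simp at hpos

theorem length_filter_ofFn {α : Type*} {k : ℕ} (q : Fin k → α) (P : α → Bool) :
    ((List.ofFn q).filter P).length = ∑ i, if P (q i) then 1 else 0 := by
  induction k with
  | zero => simp
  | succ k ih =>
    rw [List.ofFn_succ, List.filter_cons, Fin.sum_univ_succ, ← ih fun i => q i.succ]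
    split_ifs <;> simp [add_comm]

theorem HasPathDecomp.exists_pathDecomp [Fintype V] [DecidableEq V] {G : SimpleGraph V}
    {E : Finset (Sym2 V)} {f : V → ℕ} (h : HasPathDecomp E f) (hE : ∀ e, e ∈ E ↔ e ∈ G.edgeSet) :
    ∃ D : PathDecomp G, (∀ v, f v ≤ ends D v) ∧ 2 * pdCard D = ∑ v, f v := by
  obtain ⟨k, D, hnd, hlen, hedges, hends⟩ := h
  have hmem : ∀ i, ∀ e ∈ pathEdges (D i), e ∈ G.edgeSet := fun i e he =>
    (hE e).1 (Finset.mem_def.2 (hedges ▸ Multiset.mem_sum.2 ⟨i, Finset.mem_univ i, he⟩))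
  choose q hpos hpath hne hqedges hqends using fun i => exists_path_of_nodup G (hnd i) (hlen i) (hmem i)
  have hmem_iff : ∀ i e, e ∈ (q i).2.2.edges ↔ e ∈ pathEdges (D i) := fun i e => by
    rw [← hqedges, Multiset.mem_coe]
  refine ⟨⟨List.ofFn q, ?_, ?_, ?_, ?_⟩, ?_, ?_⟩
  · simpa [List.mem_ofFn] using hpos
  · simpa [List.mem_ofFn] using hpath
  · rw [List.pairwise_ofFn]
    intro i j hij e hi hj
    rw [hmem_iff] at hi hj
    have hcount := Multiset.nodup_iff_count_le_one.1 (hedges ▸ E.nodup) e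
    rw [Multiset.count_sum'] at hcount
    have hpair := Finset.sum_le_sum_of_subset (f := fun i => (pathEdges (D i)).count e)
      (Finset.subset_univ {i, j})
    rw [Finset.sum_pair hij.ne] at hpair
    have := Multiset.count_pos.2 hi
    have := Multiset.count_pos.2 hj
    omega
  · intro e he
    rw [← hE, ← Finset.mem_val, ← hedges, Multiset.mem_sum] at he
    obtain ⟨i, -, hi⟩ := he
    exact ⟨q i, List.mem_ofFn.2 ⟨i, rfl⟩, (hmem_iff i e).2 hi⟩
  · intro v
    rw [← hends, Multiset.count_sum', ends, length_filter_ofFn]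
    refine Finset.sum_le_sum fun i _ => ?_
    have := hne i
    rw [hqends, Multiset.insert_eq_cons, Multiset.count_cons, Multiset.count_singleton]
    grind
  · have hcard : ∀ i, (pathEnds (D i)).card = 2 := fun i => by rw [hqends]; rfl
    calc 2 * (List.ofFn q).length = (∑ i, pathEnds (D i)).card := by
          simp [Multiset.card_sum, hcard, mul_comm]
      _ = ∑ v, f v := by
          rw [← Multiset.sum_count_eq_card (s := Finset.univ) (by simp)]
          exact Finset.sum_congr rfl fun v _ => hends v

theorem edgeDegree_eq_ndeg_induce [DecidableEq V] {G : SimpleGraph V} {z : V}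
    {E : Finset (Sym2 V)} (hE : ∀ a b, s(a, b) ∈ E ↔ G.Adj a b ∧ a ≠ z ∧ b ≠ z) {v : V}
    (hv : v ≠ z) : edgeDegree E v = ndeg (G.induce {v | v ≠ z}) ⟨v, hv⟩ := by
  have himage : ((E.filter (v ∈ ·) : Finset (Sym2 V)) : Set (Sym2 V)) =
      (fun w : {v | v ≠ z} => s(v, (w : V))) '' {w | (G.induce {v | v ≠ z}).Adj ⟨v, hv⟩ w} := by
    ext e
    simp only [Finset.coe_filter, Set.mem_ofPred_eq, Set.mem_image]
    constructor
    · rintro ⟨he, w, rfl⟩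
      obtain ⟨hadj, -, hw⟩ := (hE _ _).1 he
      exact ⟨⟨w, hw⟩, hadj, rfl⟩
    · rintro ⟨w, hw, rfl⟩
      exact ⟨(hE _ _).2 ⟨hw, hv, w.2⟩, Sym2.mem_mk_left _ _⟩
  rw [edgeDegree, ← Set.ncard_coe_finset, himage, ndeg, Set.ncard_image_of_injective]
  intro w w' h
  exact Subtype.ext (Sym2.congr_right.1 h)

theorem eset_type_ii_special_decomposition [Fintype V] [DecidableEq V]
    (K : SimpleGraph V) (z x y : V) (hxz : x ≠ z) (hyz : y ≠ z)
    (hnbr : K.neighborSet z = {x, y})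
    (hSET : IsSETGraph (K.induce {v | v ≠ z}))
    (hx : Odd (ndeg (K.induce {v | v ≠ z}) ⟨x, hxz⟩))
    (hy : Even (ndeg (K.induce {v | v ≠ z}) ⟨y, hyz⟩)) :
    ∃ D : PathDecomp K, 2 ≤ ends D z ∧ pdCard D ≤ (Fintype.card V + 1) / 2 := by
  classical
  -- the even vertices are `y`, `b` and `c`
  obtain ⟨b, c, hbz, hcz, hyb, hyc, hbc, hadj_yb, hadj_yc, hb, hc, hodd⟩ : ∃ (b c : V) (hbz : b ≠ z)
      (hcz : c ≠ z), y ≠ b ∧ y ≠ c ∧ b ≠ c ∧ K.Adj y b ∧ K.Adj y c ∧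
      Even (ndeg (K.induce {v | v ≠ z}) ⟨b, hbz⟩) ∧ Even (ndeg (K.induce {v | v ≠ z}) ⟨c, hcz⟩) ∧
      ∀ (v : V) (hv : v ≠ z), v ≠ y → v ≠ b → v ≠ c →
        Odd (ndeg (K.induce {v | v ≠ z}) ⟨v, hv⟩) := by
    obtain ⟨⟨⟨p, hp⟩, ⟨q, hq⟩, ⟨r, hr⟩, hpq, hpr, hqr, hS, apq, apr, aqr⟩, -⟩ := hSET
    have hiff : ∀ (v : V) (hv : v ≠ z), Even (ndeg (K.induce {v | v ≠ z}) ⟨v, hv⟩) ↔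
        v = p ∨ v = q ∨ v = r := fun v hv => by
      simpa [Subtype.ext_iff] using Set.ext_iff.1 hS ⟨v, hv⟩
    simp only [SimpleGraph.comap_adj, Function.Embedding.subtype_apply, ne_eq, Subtype.mk.injEq]
      at apq apr aqr hpq hpr hqr
    simp only [hiff, ← Nat.not_even_iff_odd]
    rcases (hiff y hyz).1 hy with rfl | rfl | rfl
    · exact ⟨q, r, hq, hr, by grind [SimpleGraph.adj_comm]⟩
    · exact ⟨p, r, hp, hr, by grind [SimpleGraph.adj_comm]⟩
    · exact ⟨p, q, hp, hq, by grind [SimpleGraph.adj_comm]⟩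
  have hadj_z : ∀ w, K.Adj z w ↔ w = x ∨ w = y := fun w => by
    simpa using Set.ext_iff.1 hnbr w
  have hxy : x ≠ y := by
    rintro rfl
    exact Nat.not_even_iff_odd.2 hx hy
  have hmem : ∀ {v w}, s(v, w) ∈ K.edgeFinset ↔ K.Adj v w := by simp
  have hzx : s(z, x) ∈ K.edgeFinset := hmem.2 ((hadj_z x).2 (.inl rfl))
  have hzy : s(z, y) ∈ K.edgeFinset.erase s(z, x) :=
    Finset.mem_erase.2 ⟨by simp [hxy.symm, hyz], hmem.2 ((hadj_z y).2 (.inr rfl))⟩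
  have hminus : ∀ v w, s(v, w) ∈ (K.edgeFinset.erase s(z, x)).erase s(z, y) ↔
      K.Adj v w ∧ v ≠ z ∧ w ≠ z := by
    intro v w
    have := hadj_z v
    have := hadj_z w
    have := K.adj_comm v w
    simp only [Finset.mem_erase, hmem, ne_eq, Sym2.eq_iff]
    grind
  set E := (K.edgeFinset.erase s(z, x)).erase s(z, y)
  have hdeg_z : edgeDegree E z = 0 := by
    by_contra h
    obtain ⟨w, hw⟩ := exists_mem_of_edgeDegree_pos (Nat.pos_of_ne_zero h)
    exact ((hminus _ _).1 hw).2.1 rfl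
  simp only [← edgeDegree_eq_ndeg_induce hminus, Nat.even_iff, Nat.odd_iff] at hx hy hb hc hodd
  have hybE : s(y, b) ∈ E := (hminus _ _).2 ⟨hadj_yb, hyz, hbz⟩
  have hloop : ∀ a, s(a, a) ∉ E.erase s(y, b) := fun a ha =>
    K.loopless.irrefl a ((hminus a a).1 (Finset.mem_of_mem_erase ha)).1
  have hdeg := edgeDegree_erase hybE
  have hcy : s(c, y) ∈ E.erase s(y, b) :=
    Finset.mem_erase.2 ⟨by simp [hyc.symm, hbc.symm], (hminus _ _).2 ⟨hadj_yc.symm, hcz, hyz⟩⟩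
  have hdecomp₀ := (oddDecomposable_and_evenPairDecomposable _ hloop).2 c z hcz
    (fun h => ((hminus _ _).1 (Finset.mem_of_mem_erase h)).2.2 rfl) (edgeDegree_pos hcy)
    (by grind) (by grind) (by grind)
  have hdecomp₁ : HasPathDecomp E fun v =>
      if v = z ∨ v = b then 0 else if v = y ∨ v = c then 2 else 1 := by
    refine hdecomp₀.move_end y b hybE hyb (by grind) (fun v hv hvb => ?_) (by grind)
    obtain ⟨hadj, -, hvz⟩ := (hminus _ _).1 hv
    have := hadj.ne
    grind
  have hdecomp₂ : HasPathDecomp (K.edgeFinset.erase s(z, x)) fun v =>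
      if v = b then 0 else if v = c then 2 else 1 := by
    refine hdecomp₁.move_end z y hzy hyz.symm (by grind) (fun v hv hvy => ?_) (by grind)
    obtain ⟨hne, hv⟩ := Finset.mem_erase.1 hv
    rcases (hadj_z v).1 (hmem.1 hv) with rfl | rfl
    · exact absurd rfl hne
    · exact absurd rfl hvy
  have hdecomp₃ : HasPathDecomp K.edgeFinset fun v =>
      if v = b ∨ v = x then 0 else if v = c ∨ v = z then 2 else 1 := by
    refine hdecomp₂.move_end z x hzx hxz.symm (by grind) (fun v hv hvx => ?_) (by grind)
    obtain rfl := ((hadj_z v).1 (hmem.1 hv)).resolve_left hvx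
    simp [hyb, hyc]
  obtain ⟨D, hends, hcard⟩ := hdecomp₃.exists_pathDecomp (G := K) (by simp)
  refine ⟨D, by simpa [hbz.symm, hxz.symm] using hends z, ?_⟩
  have hsum : ∑ v, ((if v = b ∨ v = x then 0 else if v = c ∨ v = z then 2 else 1) +
      ((if v = b then 1 else 0) + if v = x then 1 else 0)) =
      ∑ v, (1 + ((if v = c then 1 else 0) + if v = z then 1 else 0)) :=
    Finset.sum_congr rfl fun v _ => by grind
  simp only [Finset.sum_add_distrib, Finset.sum_ite_eq', Finset.mem_univ, if_true,
    Finset.sum_const, Finset.card_univ, smul_eq_mul, mul_one] at hsum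
  omega
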